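/- arXiv:1801.07197 — 3 statements merged into one kernel-verified Lean document; each statement's English description precedes it below -/
import Mathlib

section
/- Let k be a positive integer and let Γ be a residually finite group. If the left-normed commutator word w_k = [x_1, …, x_k] is a probabilistic identity of Γ, then Γ satisfies an identity; more precisely, there exists a positive integer c such that the left-normed commutator [g_1^c, g_2^c, …, g_k^c] equals 1 for all g_1, …, g_k ∈ Γ. -/
open scoped Classical

/-- The commutator `[x, y] = x⁻¹y⁻¹xy` (the convention used in the paper). -/
def pcomm {G : Type*} [Group G] (x y : G) : G := x⁻¹ * y⁻¹ * x * y

/-- The left-normed commutator word `w_k = [x₁, …, x_k] ∈ F_k`,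
defined inductively by `w₁ = x₁` and `w_{j+1} = [w_j, x_{j+1}]`. -/
def commWord : (k : ℕ) → FreeGroup (Fin k)
  | 0 => 1
  | 1 => FreeGroup.of 0
  | (k + 2) =>
      pcomm (FreeGroup.map Fin.castSucc (commWord (k + 1))) (FreeGroup.of (Fin.last (k + 1)))

/-- The left-normed commutator `[g₁, …, g_k]` of group elements. -/
def commElt {G : Type*} [Group G] : {k : ℕ} → (Fin k → G) → G
  | 0, _ => 1
  | 1, f => f 0
  | (_ + 2), f => pcomm (commElt (fun i => f i.castSucc)) (f (Fin.last _))

/-- The word `[x₁², x₂, …, x_k] ∈ F_k`, defined inductively by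
`u₁ = x₁²` and `u_{j+1} = [u_j, x_{j+1}]`. -/
def sqCommWord : (k : ℕ) → FreeGroup (Fin k)
  | 0 => 1
  | 1 => FreeGroup.of 0 ^ 2
  | (k + 2) =>
      pcomm (FreeGroup.map Fin.castSucc (sqCommWord (k + 1))) (FreeGroup.of (Fin.last (k + 1)))

/-- `P_{G,w}(g) = |w_G⁻¹(g)| / |G|^k`, the probability that the word map of `w`
takes the value `g` on a uniformly random `k`-tuple. -/
noncomputable def wordProb {k : ℕ} {G : Type*} [Group G] (w : FreeGroup (Fin k)) (g : G) : ℝ :=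
  (Nat.card {f : Fin k → G // FreeGroup.lift f w = g} : ℝ) / (Nat.card G : ℝ) ^ k

/-- A group is residually finite if every nontrivial element is excluded by
some normal subgroup of finite index. -/
def ResiduallyFinite (Γ : Type*) [Group Γ] : Prop :=
  ∀ g : Γ, g ≠ 1 → ∃ Δ : Subgroup Γ, Δ.Normal ∧ Δ.FiniteIndex ∧ g ∉ Δ

/-- A word `w ≠ 1` is a probabilistic identity of `Γ` if for some `ε > 0` every
finite quotient `H` of `Γ` satisfies `P_{H,w}(1) ≥ ε`. -/
def IsProbIdentity {k : ℕ} (Γ : Type*) [Group Γ] (w : FreeGroup (Fin k)) : Prop :=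
  w ≠ 1 ∧ ∃ ε : ℝ, 0 < ε ∧
    ∀ (Δ : Subgroup Γ) [Δ.Normal], Δ.FiniteIndex → ε ≤ wordProb w (1 : Γ ⧸ Δ)

/-- `G(H)`: the intersection of the kernels of all homomorphisms from `G` to `H`. -/
def kerInt (G H : Type*) [Group G] [Group H] : Subgroup G := ⨅ φ : G →* H, φ.ker

/-- A word `1 ≠ w ∈ F_k` is good if for every `ε > 0` there is a word `1 ≠ v ∈ F_m`,
depending only on `w` and `ε`, which is an identity of every finite group `G`
satisfying `P_{G,w}(g) ≥ ε` for some `g ∈ G`. -/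
def IsGood {k : ℕ} (w : FreeGroup (Fin k)) : Prop :=
  w ≠ 1 ∧ ∀ ε : ℝ, 0 < ε → ∃ (m : ℕ) (v : FreeGroup (Fin m)), v ≠ 1 ∧
    ∀ (G : Type) [Group G] [Finite G],
      (∃ g : G, ε ≤ wordProb w g) → ∀ f : Fin m → G, FreeGroup.lift f v = 1

theorem lift_commWord_aux {G : Type*} [Group G] : ∀ (k : ℕ) (f : Fin k → G),
    FreeGroup.lift f (commWord k) = commElt f
  | 0, f => by simp [commWord, commElt]
  | 1, f => by simp [commWord, commElt]
  | (k + 2), f => by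
      have ih := lift_commWord_aux (k + 1) (fun i => f i.castSucc)
      have h2 : FreeGroup.lift f (FreeGroup.map Fin.castSucc (commWord (k + 1)))
          = FreeGroup.lift (fun i => f i.castSucc) (commWord (k + 1)) := by
        rw [← MonoidHom.comp_apply]
        congr 1
        ext i
        simp
      simp only [commWord, commElt, pcomm, map_mul, map_inv, h2, ih, FreeGroup.lift_apply_of]

theorem commElt_map_aux {G H : Type*} [Group G] [Group H] (φ : G →* H) :
    ∀ (k : ℕ) (f : Fin k → G), φ (commElt f) = commElt (fun i => φ (f i))
  | 0, f => by simp [commElt]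
  | 1, f => by simp [commElt]
  | (k + 2), f => by
      have ih := commElt_map_aux φ (k + 1) (fun i => f i.castSucc)
      simp only [commElt, pcomm, map_mul, map_inv, ih]

theorem pcomm_mem_iff_aux {G : Type*} [Group G] (N : Subgroup G) [N.Normal] (x y : G) :
    pcomm x y ∈ N ↔ (x : G ⧸ N) * y = y * x := by
  rw [← QuotientGroup.eq_one_iff]
  simp only [pcomm, QuotientGroup.mk_mul, QuotientGroup.mk_inv]
  constructor
  · intro h
    have h2 : ((y : G ⧸ N) * x)⁻¹ * (x * y) = 1 := by rw [← h]; group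
    rw [inv_mul_eq_one] at h2
    exact h2.symm
  · intro h
    have h2 : ((y : G ⧸ N) * x)⁻¹ * (x * y) = 1 := by rw [h]; group
    rw [← h2]; group

/-- elements commuting with all `m`-th powers modulo `N` -/
def powCent {G : Type*} [Group G] (N : Subgroup G) [N.Normal] (m : ℕ) : Subgroup G :=
  (Subgroup.centralizer (Set.range (fun y : G ⧸ N => y ^ m))).comap (QuotientGroup.mk' N)

theorem mem_powCent {G : Type*} [Group G] (N : Subgroup G) [N.Normal] (m : ℕ) (x : G) :
    x ∈ powCent N m ↔ ∀ y : G ⧸ N, y ^ m * x = x * y ^ m := by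
  simp [powCent, Subgroup.mem_centralizer_iff]

theorem powCent_normal {G : Type*} [Group G] (N : Subgroup G) [N.Normal] (m : ℕ) :
    (powCent N m).Normal := by
  constructor
  intro x hx g
  rw [mem_powCent] at hx ⊢
  intro y
  have h := hx ((g : G ⧸ N)⁻¹ * y * g)
  have h3 : ((g : G ⧸ N)⁻¹ * y * g) ^ m = (g : G ⧸ N)⁻¹ * y ^ m * g := by
    have := conj_pow (i := m) (a := (g : G ⧸ N)⁻¹) (b := y)
    simpa using this
  rw [h3] at h
  simp only [QuotientGroup.mk_mul, QuotientGroup.mk_inv]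
  calc y ^ m * ((g : G ⧸ N) * x * (g : G ⧸ N)⁻¹)
      = g * ((g : G ⧸ N)⁻¹ * y ^ m * g * x) * (g : G ⧸ N)⁻¹ := by group
    _ = g * (x * ((g : G ⧸ N)⁻¹ * y ^ m * g)) * (g : G ⧸ N)⁻¹ := by rw [h]
    _ = _ := by group

/-- elements with a large centralizer modulo `N` commute with `n!`-th powers modulo `N` -/
theorem mem_powCent_of_card {G : Type*} [Group G] [Finite G] (N : Subgroup G) [N.Normal]
    (δ : ℝ) (hδ : 0 < δ) (n : ℕ) (hn : 1 / δ ≤ n) (x : G)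
    (h : δ * Nat.card G ≤ Nat.card {y : G // pcomm x y ∈ N}) :
    x ∈ powCent N n.factorial := by
  set K : Subgroup G := (Subgroup.centralizer {(x : G ⧸ N)}).comap (QuotientGroup.mk' N) with hK
  have hmem : ∀ y, y ∈ K ↔ pcomm x y ∈ N := by
    intro y
    rw [pcomm_mem_iff_aux]
    simp [hK, Subgroup.mem_centralizer_iff]
  have hcard : Nat.card {y : G // pcomm x y ∈ N} = Nat.card K :=
    Nat.card_congr (Equiv.subtypeEquivRight (fun y => (hmem y).symm))
  rw [hcard] at h
  have hidx := K.card_mul_index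
  have hKpos : (0 : ℝ) < Nat.card K := by exact_mod_cast Nat.card_pos
  have hle : K.index ≤ n := by
    have h1 : (Nat.card K : ℝ) * K.index = Nat.card G := by exact_mod_cast hidx
    rw [← h1] at h
    have h2 : δ * K.index ≤ 1 := by
      by_contra hc
      push Not at hc
      nlinarith
    have h3 : (K.index : ℝ) ≤ 1 / δ := by
      rw [le_div_iff₀ hδ]; linarith
    exact_mod_cast h3.trans hn
  rw [mem_powCent]
  intro y
  obtain ⟨y, rfl⟩ := QuotientGroup.mk_surjective y
  obtain ⟨j, hj0, hj, hjm⟩ := Subgroup.exists_pow_mem_of_index_ne_zero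
    (H := K) Subgroup.FiniteIndex.index_ne_zero y
  have hy : y ^ n.factorial ∈ K := by
    obtain ⟨t, ht⟩ := Nat.dvd_factorial hj0 (hj.trans hle)
    rw [ht, pow_mul]
    exact K.pow_mem hjm t
  rw [hmem, pcomm_mem_iff_aux] at hy
  rw [← QuotientGroup.mk_pow]
  exact hy.symm

theorem count_aux {A B : Type*} [Finite A] [Finite B] (R : A → B → Prop) (S : A → Prop)
    (δ : ℝ) (hδ : 0 ≤ δ)
    (h : 2 * δ * (Nat.card A * Nat.card B) ≤ Nat.card {p : A × B // R p.1 p.2})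
    (hB : 0 < Nat.card B)
    (hS : ∀ a, δ * Nat.card B ≤ Nat.card {b : B // R a b} → S a) :
    δ * Nat.card A ≤ Nat.card {a : A // S a} := by
  have := Fintype.ofFinite A
  have := Fintype.ofFinite B
  have e : {p : A × B // R p.1 p.2} ≃ Σ a : A, {b : B // R a b} :=
    { toFun := fun p => ⟨p.1.1, p.1.2, p.2⟩
      invFun := fun q => ⟨(q.1, q.2.1), q.2.2⟩
      left_inv := fun _ => rfl
      right_inv := fun _ => rfl }
  rw [Nat.card_congr e, Nat.card_sigma] at h
  push_cast at h
  have hb : ∀ a : A, (Nat.card {b : B // R a b} : ℝ)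
      ≤ (if S a then (Nat.card B : ℝ) else 0) + δ * Nat.card B := by
    intro a
    have h0 : 0 ≤ δ * Nat.card B := by positivity
    split_ifs with hs
    · have : Nat.card {b : B // R a b} ≤ Nat.card B :=
        Nat.card_le_card_of_injective _ Subtype.val_injective
      have : (Nat.card {b : B // R a b} : ℝ) ≤ Nat.card B := by exact_mod_cast this
      linarith
    · have := mt (hS a) hs
      push Not at this
      linarith
  have h2 := h.trans (Finset.sum_le_sum (fun a _ => hb a))
  rw [Finset.sum_add_distrib, ← Finset.sum_filter, Finset.sum_const, Finset.sum_const] at h2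
  simp only [nsmul_eq_mul, Finset.card_univ] at h2
  rw [← Fintype.card_subtype, ← Nat.card_eq_fintype_card, ← Nat.card_eq_fintype_card] at h2
  have hB' : (0 : ℝ) < Nat.card B := by exact_mod_cast hB
  by_contra hc
  push Not at hc
  nlinarith

theorem main_aux.{u} (k : ℕ) : ∀ ε : ℝ, 0 < ε → ∃ c : ℕ, 0 < c ∧
    ∀ (G : Type u) [Group G] [Finite G] (N : Subgroup G) [N.Normal],
      ε * (Nat.card G : ℝ) ^ (k + 1) ≤ Nat.card {f : Fin (k + 1) → G // commElt f ∈ N} →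
      ∀ g : Fin (k + 1) → G, commElt (fun i => g i ^ c) ∈ N := by
  induction k with
  | zero =>
    intro ε hε
    refine ⟨(⌈1 / ε⌉₊).factorial, Nat.factorial_pos _, ?_⟩
    intro G _ _ N _ h g
    have e : {f : Fin 1 → G // commElt f ∈ N} ≃ N :=
      (Equiv.funUnique (Fin 1) G).subtypeEquiv (fun f => by simp [commElt])
    rw [Nat.card_congr e] at h
    have hidx := N.card_mul_index
    have hle : N.index ≤ ⌈1 / ε⌉₊ := by
      have h1 : (Nat.card N : ℝ) * N.index = Nat.card G := by exact_mod_cast hidx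
      have hpos : (0 : ℝ) < Nat.card N := by exact_mod_cast Nat.card_pos
      simp only [zero_add, pow_one] at h
      rw [← h1] at h
      have h2 : ε * N.index ≤ 1 := by
        by_contra hc
        push Not at hc
        nlinarith
      have h3 : (N.index : ℝ) ≤ 1 / ε := by
        rw [le_div_iff₀ hε]; linarith
      exact_mod_cast h3.trans (Nat.le_ceil _)
    obtain ⟨j, hj0, hj, hjm⟩ := Subgroup.exists_pow_mem_of_index_ne_zero
      (H := N) Subgroup.FiniteIndex.index_ne_zero (g 0)
    obtain ⟨t, ht⟩ := Nat.dvd_factorial hj0 (hj.trans hle)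
    simp only [commElt]
    rw [ht, pow_mul]
    exact N.pow_mem hjm t
  | succ k ih =>
    intro ε hε
    obtain ⟨c, hc, H⟩ := ih (ε / 2) (by positivity)
    set n := ⌈1 / (ε / 2)⌉₊ with hn
    refine ⟨n.factorial * c, Nat.mul_pos (Nat.factorial_pos _) hc, ?_⟩
    intro G _ _ N _ h g
    have := powCent_normal N n.factorial
    have key := H G (powCent N n.factorial) ?_
    · have h1 := key (fun i => g i.castSucc ^ n.factorial)
      simp only [commElt]
      rw [pcomm_mem_iff_aux]
      rw [mem_powCent] at h1
      have h2 := h1 ((g (Fin.last (k + 1)) ^ c : G) : G ⧸ N)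
      rw [← QuotientGroup.mk_pow, ← pow_mul] at h2
      simp only [← pow_mul] at h2
      rw [mul_comm c] at h2
      exact h2.symm
    · have e : {f : Fin (k + 2) → G // commElt f ∈ N} ≃
          {p : (Fin (k + 1) → G) × G // pcomm (commElt p.1) p.2 ∈ N} :=
        { toFun := fun f => ⟨(fun i => f.1 i.castSucc, f.1 (Fin.last _)), f.2⟩
          invFun := fun p => ⟨Fin.snoc (α := fun _ => G) p.1.1 p.1.2, by
            have := p.2
            simpa [commElt] using this⟩
          left_inv := fun f => by
            apply Subtype.ext
            exact Fin.snoc_init_self f.1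
          right_inv := fun p => by
            apply Subtype.ext
            simp }
      rw [Nat.card_congr e] at h
      have hc := count_aux (A := Fin (k + 1) → G) (B := G) (fun a b => pcomm (commElt a) b ∈ N)
        (fun a => commElt a ∈ powCent N n.factorial) (ε / 2) (by positivity) ?_ Nat.card_pos ?_
      · simpa [Nat.card_fun] using hc
      · refine le_trans (le_of_eq ?_) h
        simp only [Nat.card_fun, Nat.card_fin, Nat.cast_pow]
        ring
      · intro a ha
        exact mem_powCent_of_card N (ε / 2) (by positivity) n (Nat.le_ceil _) _ ha

/-- A residually finite group in which `w_k` is a probabilistic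
identity satisfies the identity `[x₁^c, …, x_k^c] = 1` for some `c > 0`. -/
theorem stmt6 (k : ℕ) (hk : 1 ≤ k) (Γ : Type*) [Group Γ] (hrf : ResiduallyFinite Γ)
    (h : IsProbIdentity Γ (commWord k)) :
    ∃ c : ℕ, 0 < c ∧ ∀ g : Fin k → Γ, commElt (fun i => g i ^ c) = 1 := by
  obtain ⟨k, rfl⟩ : ∃ j, k = j + 1 := ⟨k - 1, by omega⟩
  obtain ⟨-, ε, hε, h⟩ := h
  obtain ⟨c, hc, H⟩ := main_aux k ε hε
  refine ⟨c, hc, fun g => ?_⟩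
  by_contra hne
  obtain ⟨Δ, hN, hF, hg⟩ := hrf _ hne
  have h1 := h Δ hF
  have : Finite (Γ ⧸ Δ) := Subgroup.finite_quotient_of_finiteIndex
  have h2 := H (Γ ⧸ Δ) ⊥ ?_ (fun i => (g i : Γ ⧸ Δ))
  · apply hg
    rw [← QuotientGroup.eq_one_iff]
    have h3 := commElt_map_aux (QuotientGroup.mk' Δ) (k + 1) (fun i => g i ^ c)
    rw [Subgroup.mem_bot] at h2
    simp only [map_pow, QuotientGroup.mk'_apply] at h3
    rw [h3]
    exact h2
  · have hpos : (0 : ℝ) < Nat.card (Γ ⧸ Δ) := by exact_mod_cast Nat.card_pos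
    rw [wordProb, le_div_iff₀ (by positivity)] at h1
    simpa only [lift_commWord_aux, Subgroup.mem_bot] using h1
end

section
/- For every integer k ≥ 2, the word [x_1^2, x_2, …, x_k] (the left-normed commutator whose first entry is x_1^2) is good. -/
open scoped Classical

theorem lift_step {m : ℕ} {G : Type*} [Group G] (v : FreeGroup (Fin m)) (n : ℕ)
    (f : Fin (m + 1) → G) :
    FreeGroup.lift f (pcomm (FreeGroup.map Fin.castSucc v) (FreeGroup.of (Fin.last m) ^ n)) =
      pcomm (FreeGroup.lift (fun i => f i.castSucc) v) (f (Fin.last m) ^ n) := by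
  have h : FreeGroup.lift f (FreeGroup.map Fin.castSucc v) =
      FreeGroup.lift (fun i => f i.castSucc) v := by
    have : (FreeGroup.lift f).comp (FreeGroup.map Fin.castSucc) =
        FreeGroup.lift (fun i => f i.castSucc) := by
      ext i; simp
    exact DFunLike.congr_fun this v
  simp [pcomm, h]

theorem pcomm_eq_one_iff {G : Type*} [Group G] (x y : G) : pcomm x y = 1 ↔ x * y = y * x := by
  unfold pcomm
  constructor
  · intro h
    have : x * y = y * x * (x⁻¹ * y⁻¹ * x * y) := by group
    rw [this, h, mul_one]
  · intro h
    rw [mul_assoc, h]; group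

/-- level-zero action -/
def lvl {H : Type*} [Group H] : H →* Equiv.Perm (H × ℤ) where
  toFun h :=
    { toFun := fun p => if p.2 = 0 then (h * p.1, p.2) else p
      invFun := fun p => if p.2 = 0 then (h⁻¹ * p.1, p.2) else p
      left_inv := by rintro ⟨a, i⟩; by_cases hi : i = 0 <;> simp [hi]
      right_inv := by rintro ⟨a, i⟩; by_cases hi : i = 0 <;> simp [hi] }
  map_one' := by ext ⟨a, i⟩ <;> simp
  map_mul' x y := by
    apply Equiv.ext
    rintro ⟨a, i⟩; by_cases hi : i = 0 <;> simp [hi, mul_assoc]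

/-- shift -/
def shf {H : Type*} : Equiv.Perm (H × ℤ) where
  toFun p := (p.1, p.2 + 1)
  invFun p := (p.1, p.2 - 1)
  left_inv := by rintro ⟨a, i⟩; simp
  right_inv := by rintro ⟨a, i⟩; simp

theorem shf_pow {H : Type*} (n : ℕ) (p : H × ℤ) : ((shf : Equiv.Perm (H × ℤ)) ^ n) p
    = (p.1, p.2 + n) := by
  induction n with
  | zero => simp
  | succ n ih =>
    rw [pow_succ', Equiv.Perm.mul_apply, ih]
    simp [shf, add_assoc]

theorem step_ne_one {m : ℕ} (v : FreeGroup (Fin m)) (hv : v ≠ 1) (n : ℕ) (hn : 0 < n) :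
    pcomm (FreeGroup.map Fin.castSucc v) (FreeGroup.of (Fin.last m) ^ n) ≠ 1 := by
  intro h
  let f : Fin (m + 1) → Equiv.Perm (FreeGroup (Fin m) × ℤ) :=
    Fin.snoc (α := fun _ => Equiv.Perm (FreeGroup (Fin m) × ℤ))
      (fun i => lvl (FreeGroup.of i)) shf
  have h1 := lift_step v n f
  rw [h, map_one] at h1
  have h2 := (pcomm_eq_one_iff _ _).1 h1.symm
  have h3 : FreeGroup.lift (fun i : Fin m => f i.castSucc) v = lvl v := by
    have : FreeGroup.lift (fun i : Fin m => f i.castSucc) = lvl := by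
      ext1 i; simp [f]
    rw [this]
  have h4 : f (Fin.last m) = shf := by simp [f]
  rw [h3, h4] at h2
  have h5 := DFunLike.congr_fun h2 ((1 : FreeGroup (Fin m)), (0 : ℤ))
  rw [Equiv.Perm.mul_apply, Equiv.Perm.mul_apply, shf_pow, shf_pow] at h5
  simp [lvl, hn.ne'] at h5
  exact hv h5.symm

theorem of_pow_ne_one (n : ℕ) (hn : 0 < n) : (FreeGroup.of (0 : Fin 1)) ^ n ≠ 1 := by
  intro h
  have := congrArg (FreeGroup.lift (fun _ => Multiplicative.ofAdd (1 : ℤ))) h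
  rw [map_pow, FreeGroup.lift_apply_of, MonoidHom.map_one, ← ofAdd_nsmul, ofAdd_eq_one] at this
  simp at this
  omega

/-- Elements commuting with `u` modulo `K`. -/
def DD {G : Type*} [Group G] (K : Subgroup G) [K.Normal] (u : G) : Subgroup G :=
  (Subgroup.centralizer {(QuotientGroup.mk' K u)}).comap (QuotientGroup.mk' K)

theorem pcomm_mem_iff {G : Type*} [Group G] (K : Subgroup G) [K.Normal] (x y : G) :
    pcomm x y ∈ K ↔ QuotientGroup.mk' K x * QuotientGroup.mk' K y =
      QuotientGroup.mk' K y * QuotientGroup.mk' K x := by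
  rw [← pcomm_eq_one_iff, ← QuotientGroup.eq_one_iff]
  rfl

theorem mem_DD {G : Type*} [Group G] (K : Subgroup G) [K.Normal] (u x : G) :
    x ∈ DD K u ↔ pcomm u x ∈ K := by
  rw [pcomm_mem_iff, DD, Subgroup.mem_comap, Subgroup.mem_centralizer_iff]
  simp

/-- Elements commuting with all `n`-th powers modulo `K`. -/
def CC {G : Type*} [Group G] (K : Subgroup G) [K.Normal] (n : ℕ) : Subgroup G :=
  (Subgroup.centralizer (Set.range fun y : G => (QuotientGroup.mk' K (y ^ n)))).comap
    (QuotientGroup.mk' K)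

theorem mem_CC {G : Type*} [Group G] (K : Subgroup G) [K.Normal] (n : ℕ) (u : G) :
    u ∈ CC K n ↔ ∀ y : G, pcomm u (y ^ n) ∈ K := by
  rw [CC, Subgroup.mem_comap, Subgroup.mem_centralizer_iff]
  simp only [pcomm_mem_iff, Set.forall_mem_range]
  exact forall_congr' fun y => eq_comm

instance CC_normal {G : Type*} [Group G] (K : Subgroup G) [hK : K.Normal] (n : ℕ) :
    (CC K n).Normal where
  conj_mem u hu g := by
    rw [mem_CC] at hu ⊢
    intro y
    have h := hK.conj_mem _ (hu (g⁻¹ * y * g)) g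
    have e : (g⁻¹ * y * g) ^ n = g⁻¹ * y ^ n * g := by
      have := conj_pow (a := g⁻¹) (b := y) (i := n)
      simpa using this
    rw [e] at h
    convert h using 1
    simp only [pcomm]; group

theorem count_aux_s9 {A G : Type*} [Finite A] [Group G] [Finite G] (D : A → Subgroup G)
    (ε : ℝ) (hε : 0 < ε) (n : ℕ) (hn : 2 / ε ≤ n)
    (h : ε * (Nat.card A * Nat.card G) ≤ (Nat.card {p : A × G // p.2 ∈ D p.1} : ℝ)) :
    ε / 2 * Nat.card A ≤ (Nat.card {a // (D a).index ≤ n} : ℝ) := by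
  have := Fintype.ofFinite A
  have e : {p : A × G // p.2 ∈ D p.1} ≃ Σ a, D a :=
    { toFun := fun p => ⟨p.1.1, p.1.2, p.2⟩
      invFun := fun p => ⟨(p.1, p.2.1), p.2.2⟩
      left_inv := fun _ => rfl
      right_inv := fun _ => rfl }
  rw [Nat.card_congr e, Nat.card_sigma] at h
  push_cast at h
  have hG : (0 : ℝ) < Nat.card G := by exact_mod_cast Nat.card_pos
  have hb : ∀ a, (Nat.card (D a) : ℝ) ≤
      (if (D a).index ≤ n then (Nat.card G : ℝ) else 0) + ε / 2 * Nat.card G := by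
    intro a
    split_ifs with hi
    · have h1 : (Nat.card (D a) : ℝ) ≤ Nat.card G := by
        exact_mod_cast Subgroup.card_le_card_group _
      have : 0 ≤ ε / 2 * Nat.card G := by positivity
      linarith
    · have h1 : (Nat.card (D a) : ℝ) * (D a).index = Nat.card G := by
        exact_mod_cast (D a).card_mul_index
      have h2 : (n : ℝ) ≤ (D a).index := by exact_mod_cast (not_le.1 hi).le
      have h3 : 2 / ε ≤ (D a).index := hn.trans h2
      rw [div_le_iff₀ hε] at h3
      have h4 : (0 : ℝ) ≤ Nat.card (D a) := by positivity
      rw [← h1]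
      nlinarith
  have hs := Finset.sum_le_sum fun a (_ : a ∈ Finset.univ) => hb a
  rw [Finset.sum_add_distrib, Finset.sum_const, ← Finset.sum_filter, Finset.sum_const,
    nsmul_eq_mul, nsmul_eq_mul, Finset.card_univ, ← Nat.card_eq_fintype_card] at hs
  have hc : Nat.card {a // (D a).index ≤ n} =
      (Finset.univ.filter fun a => (D a).index ≤ n).card := by
    rw [Nat.card_eq_fintype_card, Fintype.card_subtype]
  rw [hc]
  have h5 := h.trans hs
  have h6 : (ε / 2 * Nat.card A) * Nat.card G ≤
      ((Finset.univ.filter fun a => (D a).index ≤ n).card : ℝ) * Nat.card G := by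
    linarith
  exact le_of_mul_le_mul_right h6 hG

/-- If `u a` commutes with `x` modulo `K` with probability at least `ε`, then `u a` lies in the
centralizer of the `n!`-th powers modulo `K` with probability at least `ε / 2`. -/
theorem count_CC {A G : Type*} [Finite A] [Group G] [Finite G] (K : Subgroup G) [K.Normal]
    (u : A → G) (ε : ℝ) (hε : 0 < ε) (n : ℕ) (hn : 2 / ε ≤ n)
    (h : ε * (Nat.card A * Nat.card G) ≤
      (Nat.card {p : A × G // pcomm (u p.1) p.2 ∈ K} : ℝ)) :
    ε / 2 * Nat.card A ≤ (Nat.card {a // u a ∈ CC K n.factorial} : ℝ) := by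
  have h1 := count_aux_s9 (fun a => DD K (u a)) ε hε n hn (by simpa only [mem_DD] using h)
  refine h1.trans ?_
  norm_cast
  refine Nat.card_le_card_of_injective (Subtype.map id ?_)
    (Subtype.map_injective _ Function.injective_id)
  intro a ha
  rw [id, mem_CC]
  intro y
  rw [← mem_DD]
  refine Subgroup.pow_mem_of_index_ne_zero_of_dvd Subgroup.index_ne_zero_of_finite y ?_
  intro m hm hm'
  exact Nat.dvd_factorial hm (hm'.trans ha)

/-- Relative version of goodness (for the value `1`). -/
def RelGood {k : ℕ} (w : FreeGroup (Fin k)) : Prop :=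
  ∀ ε : ℝ, 0 < ε → ∃ (m : ℕ) (v : FreeGroup (Fin m)), v ≠ 1 ∧
    ∀ (G : Type) [Group G] [Finite G] (K : Subgroup G) [K.Normal],
      ε * (Nat.card G : ℝ) ^ k ≤ (Nat.card {f : Fin k → G // FreeGroup.lift f w ∈ K} : ℝ) →
      ∀ f : Fin m → G, FreeGroup.lift f v ∈ K

theorem lift_step_one {m : ℕ} {G : Type*} [Group G] (v : FreeGroup (Fin m))
    (f : Fin (m + 1) → G) :
    FreeGroup.lift f (pcomm (FreeGroup.map Fin.castSucc v) (FreeGroup.of (Fin.last m))) =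
      pcomm (FreeGroup.lift (fun i => f i.castSucc) v) (f (Fin.last m)) := by
  simpa using lift_step v 1 f

/-- Splitting off the last coordinate. -/
def splitLast (k : ℕ) (G : Type*) : (Fin (k + 1) → G) ≃ (Fin k → G) × G where
  toFun f := (fun i => f i.castSucc, f (Fin.last k))
  invFun p := Fin.snoc (α := fun _ => G) p.1 p.2
  left_inv f := by
    exact Fin.snoc_init_self f
  right_inv p := by ext <;> simp

theorem relGood_step {k : ℕ} (u : FreeGroup (Fin k)) (hu : RelGood u) :
    RelGood (pcomm (FreeGroup.map Fin.castSucc u) (FreeGroup.of (Fin.last k))) := by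
  intro ε hε
  obtain ⟨n, hn⟩ := exists_nat_ge (2 / ε)
  obtain ⟨m, v, hv, H⟩ := hu (ε / 2) (by positivity)
  refine ⟨m + 1, _, step_ne_one v hv n.factorial n.factorial_pos, ?_⟩
  intro G _ _ K _ h f
  rw [lift_step]
  have h1 := count_CC K (fun f : Fin k → G => FreeGroup.lift f u) ε hε n hn (by
    rw [Nat.card_fun, Nat.card_fin]
    push_cast
    rw [← pow_succ]
    refine h.trans_eq ?_
    congr 1
    refine Nat.card_congr ((splitLast k G).subtypeEquiv ?_)
    intro f
    rw [lift_step_one]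
    rfl)
  rw [Nat.card_fun, Nat.card_fin] at h1
  push_cast at h1
  exact (mem_CC _ _ _).1 (H G (CC K n.factorial) h1 _) _

theorem relGood_sq : RelGood (FreeGroup.of (0 : Fin 1) ^ 2) := by
  intro ε hε
  obtain ⟨n, hn⟩ := exists_nat_ge (2 / ε ^ 2)
  refine ⟨2, _, step_ne_one _ (of_pow_ne_one n.factorial n.factorial_pos) n.factorial
    n.factorial_pos, ?_⟩
  intro G _ _ K _ h f
  rw [lift_step]
  have hI : ε * (Nat.card G : ℝ) ≤ Nat.card {x : G // x ^ 2 ∈ K} := by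
    rw [pow_one] at h
    refine h.trans_eq ?_
    congr 1
    refine Nat.card_congr ((Equiv.funUnique (Fin 1) G).subtypeEquiv ?_)
    intro f
    simp
  have hc : Nat.card ({x : G // x ^ 2 ∈ K} × {x : G // x ^ 2 ∈ K}) ≤
      Nat.card {p : G × G // pcomm p.1 p.2 ∈ K} := by
    -- choose for each `a` a base point
    let c : G → G := fun a => if h : ∃ x : G, x ^ 2 ∈ K ∧ (x * a) ^ 2 ∈ K then h.choose else 1
    have hcs : ∀ a x : G, x ^ 2 ∈ K → (x * a) ^ 2 ∈ K →
        (c a) ^ 2 ∈ K ∧ (c a * a) ^ 2 ∈ K := by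
      intro a x h1 h2
      have h : ∃ x : G, x ^ 2 ∈ K ∧ (x * a) ^ 2 ∈ K := ⟨x, h1, h2⟩
      have : c a = h.choose := dif_pos h
      rw [this]
      exact h.choose_spec
    have key : ∀ a x : G, x ^ 2 ∈ K → (x * a) ^ 2 ∈ K →
        (QuotientGroup.mk' K x) * QuotientGroup.mk' K a * (QuotientGroup.mk' K x)⁻¹ =
          (QuotientGroup.mk' K a)⁻¹ := by
      intro a x h1 h2
      rw [← QuotientGroup.eq_one_iff] at h1 h2
      change (QuotientGroup.mk' K x) ^ 2 = 1 at h1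
      change (QuotientGroup.mk' K x * QuotientGroup.mk' K a) ^ 2 = 1 at h2
      generalize QuotientGroup.mk' K x = X at *
      generalize QuotientGroup.mk' K a = Y at *
      have h3 : X⁻¹ = X := by rw [inv_eq_iff_mul_eq_one, ← sq, h1]
      rw [h3, eq_inv_iff_mul_eq_one, ← h2, sq]
      group
    refine Nat.card_le_card_of_injective
      (fun p => ⟨(p.1.1⁻¹ * p.2.1, (c (p.1.1⁻¹ * p.2.1))⁻¹ * p.1.1), ?_⟩) ?_
    · obtain ⟨⟨x, hx⟩, ⟨y, hy⟩⟩ := p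
      dsimp only
      have hy' : (x * (x⁻¹ * y)) ^ 2 ∈ K := by simpa using hy
      generalize x⁻¹ * y = a at *
      obtain ⟨h1, h2⟩ := hcs a x hx hy'
      have k1 := key a x hx hy'
      have k2 := key a (c a) h1 h2
      rw [pcomm_mem_iff, map_mul, map_inv]
      generalize QuotientGroup.mk' K x = X at *
      generalize QuotientGroup.mk' K a = Y at *
      generalize QuotientGroup.mk' K (c a) = Z at *
      rw [← k1] at k2
      have : Z * Y = X * Y * X⁻¹ * Z := by rw [← k2]; group
      have h4 : Y = Z⁻¹ * (X * Y * X⁻¹ * Z) := by rw [← this]; group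
      calc Y * (Z⁻¹ * X) = Z⁻¹ * (X * Y * X⁻¹ * Z) * (Z⁻¹ * X) := by rw [← h4]
        _ = Z⁻¹ * X * Y := by group
    · rintro ⟨⟨x, hx⟩, ⟨y, hy⟩⟩ ⟨⟨x', hx'⟩, ⟨y', hy'⟩⟩ h
      simp only [Subtype.mk.injEq, Prod.mk.injEq] at h
      obtain ⟨h1, h2⟩ := h
      rw [h1] at h2
      have h3 := mul_left_cancel h2
      subst h3
      have h4 := mul_left_cancel h1
      subst h4
      rfl
  have h1 := count_CC K (fun a : G => a) (ε ^ 2) (by positivity) n hn (by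
    have hc' : (Nat.card {x : G // x ^ 2 ∈ K} : ℝ) * Nat.card {x : G // x ^ 2 ∈ K} ≤
      Nat.card {p : G × G // pcomm p.1 p.2 ∈ K} := by
      rw [Nat.card_prod] at hc
      exact_mod_cast hc
    refine le_trans ?_ hc'
    calc ε ^ 2 * ((Nat.card G : ℝ) * Nat.card G) = (ε * Nat.card G) * (ε * Nat.card G) := by ring
      _ ≤ _ := mul_le_mul hI hI (by positivity) (by positivity))
  have hpow : ∀ y : G, y ^ n.factorial ∈ CC K n.factorial := by
    intro y
    refine Subgroup.pow_mem_of_index_ne_zero_of_dvd Subgroup.index_ne_zero_of_finite y ?_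
    intro m hm hm'
    refine Nat.dvd_factorial hm (hm'.trans ?_)
    have h2 : (Nat.card (CC K n.factorial) : ℝ) * (CC K n.factorial).index = Nat.card G := by
      exact_mod_cast (CC K n.factorial).card_mul_index
    have h3 : ε ^ 2 / 2 * Nat.card G ≤ (Nat.card (CC K n.factorial) : ℝ) := h1
    have h4 : (0 : ℝ) < Nat.card (CC K n.factorial) := by exact_mod_cast Nat.card_pos
    rw [← h2] at h3
    have h5 : ε ^ 2 / 2 * (CC K n.factorial).index ≤ 1 := by
      refine le_of_mul_le_mul_right ?_ h4
      linarith
    have h6 : ((CC K n.factorial).index : ℝ) ≤ 2 / ε ^ 2 := by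
      rw [le_div_iff₀ (by positivity)]
      linarith
    exact_mod_cast h6.trans hn
  have h7 : FreeGroup.lift (fun i : Fin 1 => f i.castSucc) (FreeGroup.of 0 ^ n.factorial) =
      (f 0) ^ n.factorial := by simp
  rw [h7]
  exact (mem_CC _ _ _).1 (hpow _) _

theorem sqCommWord_relGood (k : ℕ) : RelGood (sqCommWord (k + 1)) := by
  induction k with
  | zero => exact relGood_sq
  | succ k ih => exact relGood_step _ ih

theorem sqCommWord_ne_one (k : ℕ) : sqCommWord (k + 1) ≠ 1 := by
  induction k with
  | zero => exact of_pow_ne_one 2 two_pos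
  | succ k ih =>
    have h := step_ne_one _ ih 1 one_pos
    rw [pow_one] at h
    exact h

theorem card_pcomm_le {A G : Type*} [Finite A] [Group G] [Finite G] (u : A → G) (g : G) :
    Nat.card {p : A × G // pcomm (u p.1) p.2 = g} ≤
      Nat.card {p : A × G // pcomm (u p.1) p.2 = 1} := by
  let c : A → G := fun a => if h : ∃ x : G, pcomm (u a) x = g then h.choose else 1
  have hcs : ∀ a x, pcomm (u a) x = g → pcomm (u a) (c a) = g := by
    intro a x hx
    have h : ∃ x : G, pcomm (u a) x = g := ⟨x, hx⟩
    have : c a = h.choose := dif_pos h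
    rw [this]
    exact h.choose_spec
  refine Nat.card_le_card_of_injective
    (fun p => ⟨(p.1.1, p.1.2 * (c p.1.1)⁻¹), ?_⟩) ?_
  · obtain ⟨⟨a, x⟩, hx⟩ := p
    dsimp only at hx ⊢
    have h1 := hcs a x hx
    rw [← hx] at h1
    generalize c a = z at *
    generalize u a = t at *
    rw [pcomm_eq_one_iff]
    unfold pcomm at h1
    have h2 : z⁻¹ * t * z = x⁻¹ * t * x := by
      have := congrArg (fun q => t * q) h1
      simpa [mul_assoc] using this
    calc t * (x * z⁻¹) = x * (x⁻¹ * t * x) * z⁻¹ := by group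
      _ = x * (z⁻¹ * t * z) * z⁻¹ := by rw [h2]
      _ = x * z⁻¹ * t := by group
  · rintro ⟨⟨a, x⟩, hx⟩ ⟨⟨b, y⟩, hy⟩ h
    simp only [Subtype.mk.injEq, Prod.mk.injEq] at h
    obtain ⟨h1, h2⟩ := h
    subst h1
    have h3 := mul_right_cancel h2
    subst h3
    rfl

theorem isGood_of_relGood {k : ℕ} (u : FreeGroup (Fin k))
    (hne : pcomm (FreeGroup.map Fin.castSucc u) (FreeGroup.of (Fin.last k)) ≠ 1)
    (hu : RelGood (pcomm (FreeGroup.map Fin.castSucc u) (FreeGroup.of (Fin.last k)))) :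
    IsGood (pcomm (FreeGroup.map Fin.castSucc u) (FreeGroup.of (Fin.last k))) := by
  refine ⟨hne, fun ε hε => ?_⟩
  obtain ⟨m, v, hv, H⟩ := hu ε hε
  refine ⟨m, v, hv, ?_⟩
  rintro G _ _ ⟨g, hg⟩ f
  refine Subgroup.mem_bot.1 (H G ⊥ ?_ f)
  have hG : (0 : ℝ) < Nat.card G := by exact_mod_cast Nat.card_pos
  have e : ∀ g : G, Nat.card {f : Fin (k + 1) → G // FreeGroup.lift f
        (pcomm (FreeGroup.map Fin.castSucc u) (FreeGroup.of (Fin.last k))) = g} =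
      Nat.card {p : (Fin k → G) × G // pcomm (FreeGroup.lift p.1 u) p.2 = g} := by
    intro g
    refine Nat.card_congr ((splitLast k G).subtypeEquiv ?_)
    intro f
    rw [lift_step_one]
    rfl
  unfold wordProb at hg
  rw [le_div_iff₀ (by positivity), e] at hg
  simp only [Subgroup.mem_bot]
  refine hg.trans ?_
  rw [e]
  exact_mod_cast card_pcomm_le (fun p : Fin k → G => FreeGroup.lift p u) g

/-- For every `k ≥ 2`, the word `[x₁², x₂, …, x_k]` is good. -/
theorem stmt9 (k : ℕ) (hk : 2 ≤ k) : IsGood (sqCommWord k) := by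
  obtain ⟨k, rfl⟩ := Nat.exists_eq_add_of_le' hk
  exact isGood_of_relGood (sqCommWord (k + 1)) (sqCommWord_ne_one (k + 1))
    (sqCommWord_relGood (k + 1))
end

section
/- Let w ∈ F_k be a good word and let v ∈ F_m be any nontrivial word. Regard w and v as words in disjoint sets of variables, so that the products wv and vw are words in F_{k+m}. Then wv and vw are good words. -/
open scoped Classical

theorem wordProb_fiber {k m : ℕ} (w : FreeGroup (Fin k)) (W : FreeGroup (Fin (k + m)))
    (G : Type) [Group G] [Finite G] (ε : ℝ) (g : G)
    (hW : ∀ f₂ : Fin m → G, ∃ g' : G, ∀ f₁ : Fin k → G,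
      FreeGroup.lift (Fin.append f₁ f₂) W = g → FreeGroup.lift f₁ w = g')
    (h : ε ≤ wordProb W g) : ∃ g' : G, ε ≤ wordProb w g' := by
  classical
  by_contra! hc
  choose c hcc using hW
  have hpos : (0 : ℝ) < Nat.card G := by exact_mod_cast Nat.card_pos
  have _ := Fintype.ofFinite G
  let F : {f : Fin (k + m) → G // FreeGroup.lift f W = g} →
      (Σ f₂ : Fin m → G, {f₁ : Fin k → G // FreeGroup.lift f₁ w = c f₂}) := fun f =>
    ⟨fun i => f.1 (Fin.natAdd k i), ⟨fun i => f.1 (Fin.castAdd m i), hcc _ _ (by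
      rw [Fin.append_castAdd_natAdd]; exact f.2)⟩⟩
  have hF : Function.Injective F := by
    intro a b hab
    have h2 : (fun i => a.1 (Fin.natAdd k i)) = fun i => b.1 (Fin.natAdd k i) :=
      congrArg Sigma.fst hab
    have h1 : (fun i => a.1 (Fin.castAdd m i)) = fun i => b.1 (Fin.castAdd m i) :=
      congrArg (fun x : (Σ f₂ : Fin m → G, {f₁ : Fin k → G // FreeGroup.lift f₁ w = c f₂}) =>
        x.2.1) hab
    apply Subtype.ext
    rw [← Fin.append_castAdd_natAdd (f := a.1), ← Fin.append_castAdd_natAdd (f := b.1), h1, h2]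
  have hcard := Nat.card_le_card_of_injective F hF
  rw [Nat.card_sigma] at hcard
  have hcard' : (Nat.card {f : Fin (k + m) → G // FreeGroup.lift f W = g} : ℝ) ≤
      ∑ f₂ : Fin m → G, (Nat.card {f₁ : Fin k → G // FreeGroup.lift f₁ w = c f₂} : ℝ) := by
    exact_mod_cast hcard
  have hlt : ∑ f₂ : Fin m → G, (Nat.card {f₁ : Fin k → G // FreeGroup.lift f₁ w = c f₂} : ℝ) <
      ∑ f₂ : Fin m → G, ε * (Nat.card G : ℝ) ^ k := by
    apply Finset.sum_lt_sum_of_nonempty Finset.univ_nonempty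
    intro f₂ _
    have := hc (c f₂)
    rwa [wordProb, div_lt_iff₀ (by positivity)] at this
  rw [wordProb, le_div_iff₀ (by positivity)] at h
  have he : ∑ f₂ : Fin m → G, ε * (Nat.card G : ℝ) ^ k = ε * (Nat.card G : ℝ) ^ (k + m) := by
    simp [pow_add]; ring
  linarith

theorem good_of_fiber {k m : ℕ} (w : FreeGroup (Fin k)) (W : FreeGroup (Fin (k + m)))
    (hw : IsGood w) (hne : W ≠ 1)
    (hW : ∀ (G : Type) [Group G] (g : G) (f₂ : Fin m → G), ∃ g' : G, ∀ f₁ : Fin k → G,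
      FreeGroup.lift (Fin.append f₁ f₂) W = g → FreeGroup.lift f₁ w = g') : IsGood W := by
  refine ⟨hne, fun ε hε => ?_⟩
  obtain ⟨n, u, hu, H⟩ := hw.2 ε hε
  refine ⟨n, u, hu, fun G _ _ hg => H G ?_⟩
  obtain ⟨g, hg⟩ := hg
  exact wordProb_fiber w W G ε g (hW G g) hg

theorem lift_append_left {k m : ℕ} {G : Type} [Group G] (w : FreeGroup (Fin k))
    (f₁ : Fin k → G) (f₂ : Fin m → G) :
    FreeGroup.lift (Fin.append f₁ f₂) (FreeGroup.map (Fin.castAdd m) w) =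
      FreeGroup.lift f₁ w := by
  rw [← MonoidHom.comp_apply]
  congr 1
  ext i
  simp

theorem lift_append_right {k m : ℕ} {G : Type} [Group G] (v : FreeGroup (Fin m))
    (f₁ : Fin k → G) (f₂ : Fin m → G) :
    FreeGroup.lift (Fin.append f₁ f₂) (FreeGroup.map (Fin.natAdd k) v) =
      FreeGroup.lift f₂ v := by
  rw [← MonoidHom.comp_apply]
  congr 1
  ext i
  simp

theorem lift_one_fun {m : ℕ} {G : Type} [Group G] (v : FreeGroup (Fin m)) :
    FreeGroup.lift (fun _ : Fin m => (1 : G)) v = 1 := by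
  have : FreeGroup.lift (fun _ : Fin m => (1 : G)) = 1 := by
    ext i
    simp
  rw [this]; rfl

/-- If `w ∈ F_k` is good and `v ∈ F_m` is any nontrivial word in a
disjoint set of variables, then `wv` and `vw` (as words in `F_{k+m}`) are good. -/
theorem stmt15 (k m : ℕ) (w : FreeGroup (Fin k)) (v : FreeGroup (Fin m)) (hv : v ≠ 1)
    (hw : IsGood w) :
    IsGood (FreeGroup.map (Fin.castAdd m) w * FreeGroup.map (Fin.natAdd k) v) ∧
      IsGood (FreeGroup.map (Fin.natAdd k) v * FreeGroup.map (Fin.castAdd m) w) := by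
  refine ⟨good_of_fiber w _ hw ?_ ?_, good_of_fiber w _ hw ?_ ?_⟩
  · intro h
    have := congrArg (FreeGroup.lift (Fin.append FreeGroup.of fun _ => (1 : FreeGroup (Fin k)))) h
    rw [map_mul, lift_append_left, lift_append_right, lift_one_fun, FreeGroup.lift_of_eq_id] at this
    exact hw.1 (by simpa using this)
  · intro G _ g f₂
    refine ⟨g * (FreeGroup.lift f₂ v)⁻¹, fun f₁ h => ?_⟩
    rw [map_mul, lift_append_left, lift_append_right] at h
    rw [← h]; group
  · intro h
    have := congrArg (FreeGroup.lift (Fin.append FreeGroup.of fun _ => (1 : FreeGroup (Fin k)))) h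
    rw [map_mul, lift_append_left, lift_append_right, lift_one_fun, FreeGroup.lift_of_eq_id] at this
    exact hw.1 (by simpa using this)
  · intro G _ g f₂
    refine ⟨(FreeGroup.lift f₂ v)⁻¹ * g, fun f₁ h => ?_⟩
    rw [map_mul, lift_append_left, lift_append_right] at h
    rw [← h]; group
end
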